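/- An operator commuting with all field components is a multiple of the identity: if a linear endomorphism T of R satisfies T ∘ M_i = M_i ∘ T and T ∘ pderiv i = pderiv i ∘ T for every i ∈ σ, then there exists c ∈ ℝ with T = c • id. -/

import Mathlib

open MvPolynomial

/-!
Commuting with the generators `X i` makes `T` linear over the polynomial ring, hence multiplication
by `T 1`. Applying `T ∘ ∂ᵢ = ∂ᵢ ∘ T` to `1` shows that all partial derivatives of `T 1` vanish, and
without additive torsion in the coefficients this forces `T 1` to be a constant.
-/

theorem map_smul_of_mem_adjoin {R A M N : Type*} [CommSemiring R] [Semiring A] [Algebra R A]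
    [AddCommMonoid M] [Module R M] [Module A M] [IsScalarTower R A M]
    [AddCommMonoid N] [Module R N] [Module A N] [IsScalarTower R A N]
    (T : M →ₗ[R] N) {s : Set A} (hs : ∀ a ∈ s, ∀ m, T (a • m) = a • T m)
    {a : A} (ha : a ∈ Algebra.adjoin R s) (m : M) : T (a • m) = a • T m := by
  induction ha using Algebra.adjoin_induction generalizing m with
  | mem a ha => exact hs a ha m
  | algebraMap r => simp only [algebraMap_smul, map_smul]
  | add a b _ _ iha ihb => simp only [add_smul, map_add, iha, ihb]
  | mul a b _ _ iha ihb => rw [mul_smul, iha, ihb, mul_smul]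

section

variable {σ R : Type*} [CommSemiring R]

theorem eq_mulLeft_apply_one_of_comp_mulLeft_X (T : MvPolynomial σ R →ₗ[R] MvPolynomial σ R)
    (hM : ∀ i, T ∘ₗ LinearMap.mulLeft R (X i) = LinearMap.mulLeft R (X i) ∘ₗ T) :
    T = LinearMap.mulLeft R (T 1) := by
  have hX : ∀ q ∈ Set.range (X : σ → MvPolynomial σ R), ∀ p, T (q • p) = q • T p := by
    rintro _ ⟨i, rfl⟩ p
    exact LinearMap.congr_fun (hM i) p
  refine LinearMap.ext fun p ↦ ?_
  have hp : p ∈ Algebra.adjoin R (Set.range X) := adjoin_range_X (R := R) ▸ Algebra.mem_top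
  calc T p = T (p • 1) := by rw [smul_eq_mul, mul_one]
    _ = p • T 1 := map_smul_of_mem_adjoin T hX hp 1
    _ = T 1 * p := mul_comm _ _

variable [IsAddTorsionFree R]

theorem pderiv_eq_zero_iff_notMem_vars {i : σ} {p : MvPolynomial σ R} :
    pderiv i p = 0 ↔ i ∉ p.vars := by
  refine ⟨fun hp hi ↦ ?_, pderiv_eq_zero_of_notMem_vars⟩
  obtain ⟨d, hd, hid⟩ := (mem_vars_iff_mem_support i).mp hi
  have hle : Finsupp.single i 1 ≤ d :=
    Finsupp.single_le_iff.mpr (Nat.one_le_iff_ne_zero.mpr (Finsupp.mem_support_iff.mp hid))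
  obtain ⟨e, rfl⟩ := exists_add_of_le hle
  have hcoeff : (e i + 1) • coeff (Finsupp.single i 1 + e) p = 0 := by
    rw [nsmul_eq_mul', Nat.cast_add_one, add_comm (Finsupp.single i 1), ← coeff_pderiv, hp,
      coeff_zero]
  exact mem_support_iff.mp hd ((nsmul_eq_zero_iff_right (e i).succ_ne_zero).mp hcoeff)

theorem forall_pderiv_eq_zero_iff_eq_C {p : MvPolynomial σ R} :
    (∀ i, pderiv i p = 0) ↔ p = C (coeff 0 p) := by
  simp only [pderiv_eq_zero_iff_notMem_vars, ← Finset.eq_empty_iff_forall_notMem,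
    vars_eq_empty_iff_eq_C]

theorem commutes_with_fields_imp_scalar_general (T : MvPolynomial σ R →ₗ[R] MvPolynomial σ R)
    (hM : ∀ i, T ∘ₗ LinearMap.mulLeft R (X i) = LinearMap.mulLeft R (X i) ∘ₗ T)
    (hD : ∀ i, T ∘ₗ (pderiv i).toLinearMap = (pderiv i).toLinearMap ∘ₗ T) :
    ∃ c : R, T = c • LinearMap.id := by
  have hderiv (i : σ) : pderiv i (T 1) = 0 := by
    simpa using (LinearMap.congr_fun (hD i) 1).symm
  have hconst : T 1 = C (coeff 0 (T 1)) := forall_pderiv_eq_zero_iff_eq_C.mp hderiv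
  refine ⟨coeff 0 (T 1), LinearMap.ext fun p ↦ ?_⟩
  calc T p = T 1 * p := LinearMap.congr_fun (eq_mulLeft_apply_one_of_comp_mulLeft_X T hM) p
    _ = C (coeff 0 (T 1)) * p := by rw [← hconst]
    _ = coeff 0 (T 1) • p := C_mul'

end

/-- An operator commuting with multiplication by every variable and with every formal
partial derivative is a real multiple of the identity. -/
theorem commutes_with_fields_imp_scalar (σ : Type*)
    (T : MvPolynomial σ ℝ →ₗ[ℝ] MvPolynomial σ ℝ)
    (hM : ∀ i : σ, T ∘ₗ LinearMap.mulLeft ℝ (X i) = LinearMap.mulLeft ℝ (X i) ∘ₗ T)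
    (hD : ∀ i : σ, T ∘ₗ (MvPolynomial.pderiv i).toLinearMap
        = (MvPolynomial.pderiv i).toLinearMap ∘ₗ T) :
    ∃ c : ℝ, T = c • LinearMap.id :=
  commutes_with_fields_imp_scalar_general T hM hD
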